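/- Let 0 < σ < 1, let P be a real homogeneous polynomial of even degree 2k in n variables with P ≠ 0, let |ε| ≤ K(σ,P)⁻¹, and let μ be the probability measure on ℝⁿ with density f(·;ε,σ,P). If a ∈ ℝⁿ is a nonzero vector with P(a) = 0, then the pushforward of μ under x ↦ aᵀx is the Gaussian distribution on ℝ with mean 0 and variance |a|². -/

import Mathlib

open MeasureTheory Real ProbabilityTheory

noncomputable def hermiteR (m : ℕ) (x : ℝ) : ℝ :=
  Polynomial.aeval x (Polynomial.hermite m)

noncomputable def renorm {n : ℕ} (P : MvPolynomial (Fin n) ℝ) (x : Fin n → ℝ) : ℝ :=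
  ∑ m ∈ P.support, P.coeff m * ∏ i, hermiteR (m i) (x i)

noncomputable def Kconst (n k : ℕ) (σ : ℝ) (P : MvPolynomial (Fin n) ℝ) : ℝ :=
  ⨆ x : Fin n → ℝ, (σ ^ (n + 2*k))⁻¹ * |renorm P x| * Real.exp (-(1 - σ^2) * (∑ i, x i ^ 2) / 2)

noncomputable def fdens (n k : ℕ) (σ ε : ℝ) (P : MvPolynomial (Fin n) ℝ) (x : Fin n → ℝ) : ℝ :=
  (2*π)^(-(n:ℝ)/2) * Real.exp (-(∑ i, x i ^ 2)/2) *
    (1 + (-1)^k * ε * (σ^(n+2*k))⁻¹ * renorm P (fun i => x i / σ) *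
      Real.exp (-(1-σ^2) * (∑ i, x i ^ 2) / (2*σ^2)))

noncomputable def gdens (n k : ℕ) (σ ε : ℝ) (P : MvPolynomial (Fin n) ℝ) (a : Fin n → ℝ) (x : ℝ) : ℝ :=
  (2*π)^(-(1:ℝ)/2) * (Real.exp (-x^2/2) +
    (-1)^k * ε * MvPolynomial.eval a P * (σ^(2*k+1))⁻¹ * hermiteR (2*k) (x/σ) * Real.exp (-x^2/(2*σ^2)))

noncomputable def gH (σ : ℝ) (m : ℕ) (x : ℝ) : ℝ :=
  hermiteR m (x / σ) * Real.exp (-x ^ 2 / (2 * σ ^ 2))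

lemma gH_integrable (σ : ℝ) (hσ : 0 < σ) (m : ℕ) : Integrable (gH σ m) := by
  have h1 : ∀ p : Polynomial ℤ, Integrable
      (fun y : ℝ => Polynomial.aeval y p * Real.exp (-(1 / 2 : ℝ) * y ^ 2)) := by
    intro p
    induction p using Polynomial.induction_on' with
    | add p q hp hq =>
      simp only [map_add, add_mul]
      exact hp.add hq
    | monomial j c =>
      have := integrable_rpow_mul_exp_neg_mul_sq (b := 1 / 2) (by norm_num) (s := (j : ℝ))
        (by have : (0 : ℝ) ≤ j := Nat.cast_nonneg j
            linarith)
      simp only [Real.rpow_natCast] at this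
      simpa [Polynomial.aeval_monomial, mul_assoc] using this.const_mul (c : ℝ)
  have h2 := (h1 (Polynomial.hermite m)).comp_div hσ.ne'
  refine h2.congr (Filter.Eventually.of_forall fun x => ?_)
  simp only [gH, hermiteR]
  congr 2
  field_simp

lemma gH_hasDerivAt (σ : ℝ) (hσ : 0 < σ) (m : ℕ) (x : ℝ) :
    HasDerivAt (gH σ m) (-(1 / σ) * gH σ (m + 1) x) x := by
  have h1 : HasDerivAt (fun x : ℝ => x / σ) (1 / σ) x := (hasDerivAt_id x).div_const σ
  have h2 := ((Polynomial.hermite m).hasDerivAt_aeval (x / σ)).comp x h1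
  have h3 : HasDerivAt (fun x : ℝ => -x ^ 2 / (2 * σ ^ 2)) (-(2 * x) / (2 * σ ^ 2)) x := by
    simpa using ((hasDerivAt_pow 2 x).neg.div_const (2 * σ ^ 2))
  have h4 := h2.mul h3.exp
  refine h4.congr_deriv ?_
  simp only [gH, hermiteR, Polynomial.hermite_succ, map_sub, map_mul, Polynomial.aeval_X,
    Function.comp]
  field_simp
  ring

lemma gH_cexp_integrable (s : ℝ) (g : ℝ → ℝ) (hg : Integrable g) :
    Integrable (fun x : ℝ => Complex.exp (s * x * Complex.I) * (g x : ℂ)) := by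
  refine hg.ofReal.bdd_mul (c := 1) (by fun_prop) ?_
  refine Filter.Eventually.of_forall fun x => ?_
  have := Complex.norm_exp_ofReal_mul_I (s * x)
  push_cast at this
  exact this.le

lemma gH_fourier (σ : ℝ) (hσ : 0 < σ) (s : ℝ) (m : ℕ) :
    ∫ x : ℝ, Complex.exp (s * x * Complex.I) * (gH σ m x : ℂ)
      = (Complex.I * σ * s) ^ m * ∫ x : ℝ, Complex.exp (s * x * Complex.I) * (gH σ 0 x : ℂ) := by
  induction m with
  | zero => simp
  | succ m ih =>
    have i0 := gH_cexp_integrable s _ (gH_integrable σ hσ m)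
    have i1 := gH_cexp_integrable s _ (gH_integrable σ hσ (m + 1))
    have hd : ∀ x : ℝ, HasDerivAt
        (fun x : ℝ => Complex.exp (s * x * Complex.I) * (gH σ m x : ℂ))
        ((s * Complex.I) * (Complex.exp (s * x * Complex.I) * (gH σ m x : ℂ))
          + (-(1 / σ) : ℂ) * (Complex.exp (s * x * Complex.I) * (gH σ (m + 1) x : ℂ))) x := by
      intro x
      have h1 : HasDerivAt (fun x : ℝ => (s * x * Complex.I : ℂ)) (s * Complex.I) x := by
        have := ((Complex.ofRealCLM.hasDerivAt (x := x)).const_mul (s : ℂ)).mul_const Complex.I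
        simpa using this
      have h2 := h1.cexp.mul (gH_hasDerivAt σ hσ m x).ofReal_comp
      refine h2.congr_deriv ?_
      push_cast
      ring
    have h0 := integral_eq_zero_of_hasDerivAt_of_integrable hd
      ((i0.const_mul _).add (i1.const_mul _)) i0
    rw [integral_add (i0.const_mul _) (i1.const_mul _), integral_const_mul,
      integral_const_mul, ih] at h0
    generalize (∫ x : ℝ, Complex.exp (s * x * Complex.I) * (gH σ 0 x : ℂ)) = A at h0 ⊢
    generalize (∫ x : ℝ, Complex.exp (s * x * Complex.I) * (gH σ (m + 1) x : ℂ)) = B at h0 ⊢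
    have hσ' : (σ : ℂ) ≠ 0 := by exact_mod_cast hσ.ne'
    have h5 : (σ : ℂ) * (1 / σ) = 1 := by field_simp
    rw [pow_succ]
    linear_combination (-σ : ℂ) * h0 - B * h5

lemma fdens_nonneg' (n k : ℕ) (σ : ℝ) (hσ0 : 0 < σ) (P : MvPolynomial (Fin n) ℝ)
    (ε : ℝ) (hε : |ε| ≤ (Kconst n k σ P)⁻¹) (x : Fin n → ℝ) : 0 ≤ fdens n k σ ε P x := by
  unfold fdens
  refine mul_nonneg (by positivity) ?_
  set F : (Fin n → ℝ) → ℝ := fun x =>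
    (σ ^ (n + 2*k))⁻¹ * |renorm P x| * Real.exp (-(1 - σ^2) * (∑ i, x i ^ 2) / 2) with hF
  have hK : Kconst n k σ P = ⨆ x, F x := rfl
  have hF0 : ∀ x, 0 ≤ F x := fun x => by simp only [hF]; positivity
  have key : |ε| * F (fun i => x i / σ) ≤ 1 := by
    by_cases hb : BddAbove (Set.range F)
    · have h1 : F (fun i => x i / σ) ≤ Kconst n k σ P := hK ▸ le_ciSup hb _
      have h2 : 0 ≤ Kconst n k σ P := (hF0 _).trans h1
      calc |ε| * F (fun i => x i / σ) ≤ (Kconst n k σ P)⁻¹ * Kconst n k σ P := by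
            gcongr
        _ ≤ 1 := inv_mul_le_one
    · have : Kconst n k σ P = 0 := by rw [hK, Real.iSup_of_not_bddAbove hb]
      rw [this, inv_zero] at hε
      have h0 : |ε| = 0 := le_antisymm hε (abs_nonneg _)
      rw [h0]; simp
  have e : (-(1-σ^2) * (∑ i, x i ^ 2) / (2*σ^2)) = -(1 - σ^2) * (∑ i, (x i / σ) ^ 2) / 2 := by
    simp only [div_pow, ← Finset.sum_div]
    field_simp
  rw [e]
  have h3 : |(-1)^k * ε * (σ^(n+2*k))⁻¹ * renorm P (fun i => x i / σ) *
      Real.exp (-(1 - σ^2) * (∑ i, (x i / σ) ^ 2) / 2)| = |ε| * F (fun i => x i / σ) := by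
    simp only [hF, abs_mul, abs_pow, abs_neg, abs_one, one_pow, one_mul, abs_inv, Real.abs_exp,
      abs_of_pos hσ0]
    ring
  have := neg_le_of_abs_le (h3.trans_le key)
  linarith

lemma fdens_eq (n k : ℕ) (σ : ℝ) (hσ0 : 0 < σ) (P : MvPolynomial (Fin n) ℝ)
    (ε : ℝ) (x : Fin n → ℝ) : fdens n k σ ε P x = ∏ i, gaussianPDFReal 0 1 (x i) +
      ((2*π)^(-(n:ℝ)/2) * (-1)^k * ε * (σ^(n+2*k))⁻¹) *
        ∑ m ∈ P.support, P.coeff m * ∏ i, gH σ (m i) (x i) := by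
  have h1 : ∏ i, gaussianPDFReal 0 1 (x i) =
      (2*π)^(-(n:ℝ)/2) * Real.exp (-(∑ i, x i ^ 2)/2) := by
    simp only [gaussianPDFReal, Finset.prod_mul_distrib, Finset.prod_const, Finset.card_univ,
      Fintype.card_fin, ← Real.exp_sum]
    congr 1
    · rw [Real.sqrt_eq_rpow, ← Real.rpow_neg (by positivity), ← Real.rpow_natCast,
        ← Real.rpow_mul (by positivity)]
      simp only [NNReal.coe_one, mul_one]
      congr 1
      ring
    · simp [Finset.sum_div, neg_div]
  have h2 : ∑ m ∈ P.support, P.coeff m * ∏ i, gH σ (m i) (x i) =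
      renorm P (fun i => x i / σ) * Real.exp (-(∑ i, x i ^ 2)/2) *
        Real.exp (-(1-σ^2) * (∑ i, x i ^ 2) / (2*σ^2)) := by
    rw [mul_assoc, ← Real.exp_add, renorm, Finset.sum_mul]
    refine Finset.sum_congr rfl fun m _ => ?_
    simp only [gH, Finset.prod_mul_distrib, ← Real.exp_sum, ← Finset.sum_div, mul_assoc,
      Finset.sum_neg_distrib]
    congr 3
    field_simp
    ring
  rw [h1, h2, fdens]
  ring

lemma prod_int (n : ℕ) (g : Fin n → ℝ → ℝ) (hg : ∀ i, Integrable (g i)) :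
    Integrable (fun x : Fin n → ℝ => ∏ i, g i (x i)) :=
  Integrable.fintype_prod hg

lemma prod_cexp (n : ℕ) (t : ℝ) (a x : Fin n → ℝ) (g : Fin n → ℝ → ℝ) :
    Complex.exp (t * (∑ i, a i * x i : ℝ) * Complex.I) * ((∏ i, g i (x i) : ℝ) : ℂ)
      = ∏ i, (Complex.exp ((t * a i : ℝ) * x i * Complex.I) * (g i (x i) : ℂ)) := by
  rw [Finset.prod_mul_distrib, ← Complex.exp_sum]
  push_cast
  congr 2
  rw [Finset.mul_sum, Finset.sum_mul]
  refine Finset.sum_congr rfl fun i _ => ?_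
  ring

lemma prod_cexp_integrable (n : ℕ) (t : ℝ) (a : Fin n → ℝ) (g : Fin n → ℝ → ℝ)
    (hg : ∀ i, Integrable (g i)) : Integrable (fun x : Fin n → ℝ =>
    Complex.exp (t * (∑ i, a i * x i : ℝ) * Complex.I) * ((∏ i, g i (x i) : ℝ) : ℂ)) := by
  simp only [prod_cexp]
  exact Integrable.fintype_prod
    (f := fun i (y : ℝ) => Complex.exp ((t * a i : ℝ) * y * Complex.I) * (g i y : ℂ))
    fun i => gH_cexp_integrable (t * a i) (g i) (hg i)

lemma prod_cexp_integral (n : ℕ) (t : ℝ) (a : Fin n → ℝ) (g : Fin n → ℝ → ℝ) :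
    ∫ x : Fin n → ℝ,
      Complex.exp (t * (∑ i, a i * x i : ℝ) * Complex.I) * ((∏ i, g i (x i) : ℝ) : ℂ)
    = ∏ i, ∫ y : ℝ, Complex.exp ((t * a i : ℝ) * y * Complex.I) * (g i y : ℂ) := by
  simp only [prod_cexp]
  exact integral_fintype_prod_volume_eq_prod
    (f := fun i (y : ℝ) => Complex.exp ((t * a i : ℝ) * y * Complex.I) * (g i y : ℂ))

lemma gauss_fourier (s : ℝ) :
    ∫ y : ℝ, Complex.exp (s * y * Complex.I) * (gaussianPDFReal 0 1 y : ℂ)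
      = Complex.exp (-(s ^ 2 / 2 : ℝ)) := by
  have := charFun_gaussianReal (μ := 0) (v := 1) s
  rw [charFun_apply_real, integral_gaussianReal_eq_integral_smul one_ne_zero] at this
  simp only [Complex.real_smul] at this
  simp only [mul_comm (Complex.exp _)]
  rw [this]
  congr 1
  push_cast
  simp

/-- Under the probability measure μ with density f(·;ε,σ,P), if a ≠ 0 and P(a) = 0 then
the pushforward of μ under x ↦ aᵀx is the Gaussian with mean 0 and variance |a|². -/
theorem stmt_6 (n k : ℕ) (σ : ℝ) (hσ0 : 0 < σ) (hσ1 : σ < 1)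
    (P : MvPolynomial (Fin n) ℝ) (hP : P.IsHomogeneous (2 * k)) (hP0 : P ≠ 0)
    (ε : ℝ) (hε : |ε| ≤ (Kconst n k σ P)⁻¹)
    (μ : Measure (Fin n → ℝ))
    (hμ : μ = volume.withDensity (fun x => ENNReal.ofReal (fdens n k σ ε P x)))
    (a : Fin n → ℝ) (ha : a ≠ 0) (haP : MvPolynomial.eval a P = 0) :
    Measure.map (fun x => ∑ i, a i * x i) μ
      = gaussianReal 0 (Real.toNNReal (∑ i, a i ^ 2)) := by
  have hcont : Continuous (fun x : Fin n → ℝ => ∑ i, a i * x i) := by fun_prop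
  have hint : Integrable (fdens n k σ ε P) := by
    have : fdens n k σ ε P = fun x => _ := funext (fdens_eq n k σ hσ0 P ε)
    rw [this]
    refine (prod_int n _ fun i => integrable_gaussianPDFReal 0 1).add (Integrable.const_mul ?_ _)
    refine integrable_finsetSum _ fun m _ => Integrable.const_mul ?_ _
    exact prod_int n (fun i => gH σ (m i)) fun i => gH_integrable σ hσ0 (m i)
  have hfin : IsFiniteMeasure μ := by
    rw [hμ]; exact isFiniteMeasure_withDensity_ofReal hint.2
  have hfin' : IsFiniteMeasure (Measure.map (fun x => ∑ i, a i * x i) μ) :=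
    Measure.isFiniteMeasure_map _ _
  refine Measure.ext_of_charFun (funext fun t => ?_)
  rw [charFun_gaussianReal, charFun_apply_real,
    integral_map hcont.aemeasurable (by fun_prop), hμ,
    integral_withDensity_eq_integral_toReal_smul₀ hint.1.aemeasurable.ennreal_ofReal
      (by simp)]
  have hgi : ∀ m : Fin n →₀ ℕ, ∀ i, Integrable (gH σ (m i)) := fun m i => gH_integrable σ hσ0 _
  set c : ℝ := (2*π)^(-(n:ℝ)/2) * (-1)^k * ε * (σ^(n+2*k))⁻¹ with hc
  have hrw : ∀ x : Fin n → ℝ, (ENNReal.ofReal (fdens n k σ ε P x)).toReal •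
      Complex.exp (t * (∑ i, a i * x i : ℝ) * Complex.I) =
      Complex.exp (t * (∑ i, a i * x i : ℝ) * Complex.I) *
        ((∏ i, gaussianPDFReal 0 1 (x i) : ℝ) : ℂ) +
      c * ∑ m ∈ P.support, ((P.coeff m : ℝ) : ℂ) *
        (Complex.exp (t * (∑ i, a i * x i : ℝ) * Complex.I) *
          ((∏ i, gH σ (m i) (x i) : ℝ) : ℂ)) := by
    intro x
    rw [ENNReal.toReal_ofReal (fdens_nonneg' n k σ hσ0 P ε hε x), fdens_eq n k σ hσ0,
      Complex.real_smul, ← hc, Complex.ofReal_add, Complex.ofReal_mul, Complex.ofReal_sum,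
      add_mul, mul_comm (Complex.ofReal _), mul_assoc (c : ℂ), Finset.sum_mul]
    congr 2
    refine Finset.sum_congr rfl fun m _ => ?_
    rw [Complex.ofReal_mul]
    ring
  have i1 := prod_cexp_integrable n t a (fun _ => gaussianPDFReal 0 1)
    (fun _ => integrable_gaussianPDFReal 0 1)
  have i2 : ∀ m ∈ P.support, Integrable (fun x : Fin n → ℝ => ((P.coeff m : ℝ) : ℂ) *
        (Complex.exp (t * (∑ i, a i * x i : ℝ) * Complex.I) *
          ((∏ i, gH σ (m i) (x i) : ℝ) : ℂ))) := fun m _ =>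
    (prod_cexp_integrable n t a (fun i => gH σ (m i)) (hgi m)).const_mul _
  rw [integral_congr_ae (Filter.Eventually.of_forall hrw),
    integral_add i1 ((integrable_finsetSum _ i2).const_mul _), integral_const_mul,
    integral_finsetSum _ i2]
  have hz : ∑ m ∈ P.support, ∫ x : Fin n → ℝ, ((P.coeff m : ℝ) : ℂ) *
        (Complex.exp (t * (∑ i, a i * x i : ℝ) * Complex.I) *
          ((∏ i, gH σ (m i) (x i) : ℝ) : ℂ)) = 0 := by
    have h1 : ∀ m ∈ P.support, ∫ x : Fin n → ℝ, ((P.coeff m : ℝ) : ℂ) *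
        (Complex.exp (t * (∑ i, a i * x i : ℝ) * Complex.I) *
          ((∏ i, gH σ (m i) (x i) : ℝ) : ℂ)) =
        ((P.coeff m * ∏ i, a i ^ m i : ℝ) : ℂ) * ((Complex.I * σ * t) ^ (2 * k) *
        ∏ i, ∫ y : ℝ, Complex.exp ((t * a i : ℝ) * y * Complex.I) * (gH σ 0 y : ℂ)) := by
      intro m hm
      rw [integral_const_mul, prod_cexp_integral n t a (fun i => gH σ (m i))]
      simp only [gH_fourier σ hσ0 _ (m _)]
      rw [Finset.prod_mul_distrib]
      have hdeg : ∑ i, m i = 2 * k := by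
        have := hP (MvPolynomial.mem_support_iff.mp hm)
        rw [← this, Finsupp.weight_apply, Finsupp.sum_fintype _ _ (by simp)]
        simp
      have : ∏ i, (Complex.I * σ * ((t * a i : ℝ) : ℂ)) ^ m i
          = (Complex.I * σ * t) ^ (2 * k) * ∏ i, (a i : ℂ) ^ m i := by
        rw [← hdeg, ← Finset.prod_pow_eq_pow_sum, ← Finset.prod_mul_distrib]
        refine Finset.prod_congr rfl fun i _ => ?_
        rw [← mul_pow]
        push_cast
        ring
      rw [this]
      push_cast
      ring
    rw [Finset.sum_congr rfl h1, ← Finset.sum_mul, ← Complex.ofReal_sum,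
      ← MvPolynomial.eval_eq', haP]
    simp
  rw [hz, prod_cexp_integral n t a (fun _ => gaussianPDFReal 0 1)]
  simp only [gauss_fourier]
  rw [← Complex.exp_sum]
  rw [mul_zero, add_zero]
  congr 1
  have hpos : 0 ≤ ∑ i, a i ^ 2 := by positivity
  rw [Real.coe_toNNReal _ hpos]
  push_cast
  have e : ∀ i, -(((t : ℂ) * (a i : ℂ)) ^ 2 / 2) = (a i : ℂ) ^ 2 * (-(t : ℂ) ^ 2 / 2) := by
    intro i
    ring
  simp only [e, ← Finset.sum_mul]
  ring
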